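/- Let H be a finite-dimensional complex Hilbert space, Â and B̂ self-adjoint operators with nondegenerate spectra satisfying ⟨φ_a^Â, φ_b^B̂⟩ ≠ 0 for all (a,b), and let (S_{a,b}) be a Born-compatible frame for Â and B̂ forming a basis of 𝓛(H), with dual frame (T_{a,b}) and associated quasiprobability representation (Q, Q̃). Then the Q-conditional expectation satisfies the right pull-through property 𝔼^Q_ρ̂(X̂ f(B̂)|B̂) = f(B̂) 𝔼^Q_ρ̂(X̂|B̂) for all density matrices ρ̂ with ⟨φ_b^B̂, ρ̂ φ_b^B̂⟩ ≠ 0 (∀b), all X̂ ∈ 𝓛(H), and all f : σ(B̂) → ℂ, if and only if S_{a,b} = Π_b^B̂ Π_a^Â for all (a,b), i.e., (Q, Q̃) is the right Kirkwood-Dirac representation. -/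

import Mathlib

open scoped ComplexOrder
noncomputable section

variable {H : Type*} [NormedAddCommGroup H] [InnerProductSpace ℂ H] [FiniteDimensional ℂ H]

/-- The rank-one orthogonal projector onto the line spanned by a unit vector `v`. -/
def proj (v : H) : H →ₗ[ℂ] H where
  toFun w := (inner ℂ v w : ℂ) • v
  map_add' x y := by simp [inner_add_right, add_smul]
  map_smul' c x := by simp [inner_smul_right, smul_smul]

/-- The operator `f(Ŷ) = Σ_y f(y) Π_y` associated to a function `f` on the spectrum,
for an operator with orthonormal eigenbasis `φ`. -/
def opF {ι : Type*} [Fintype ι] (φ : ι → H) (f : ι → ℂ) : H →ₗ[ℂ] H :=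
  ∑ i, f i • proj (φ i)


/-- The `Q`-conditional expectation
`𝔼^Q_ρ̂(X̂|B̂) = Σ_{(a,b)} conj(Q̃_{a,b}(X̂†)) (Q_{a,b}(ρ̂)/⟨φ_b^B̂, ρ̂ φ_b^B̂⟩) Π_b^B̂`,
where `Q_{a,b}(ρ̂) = Tr(ρ̂ S†_{a,b})` and `Q̃_{a,b}(X̂) = Tr(X̂ T†_{a,b})`. -/
def QcondExp {ιA ιB : Type*} [Fintype ιA] [Fintype ιB] (φB : ιB → H)
    (S T : ιA × ιB → (H →ₗ[ℂ] H)) (ρ X : H →ₗ[ℂ] H) : H →ₗ[ℂ] H :=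
  ∑ p : ιA × ιB,
    ((starRingEnd ℂ)
        (LinearMap.trace ℂ H (LinearMap.adjoint X ∘ₗ LinearMap.adjoint (T p))) *
      (LinearMap.trace ℂ H (ρ ∘ₗ LinearMap.adjoint (S p)) /
        (inner ℂ (φB p.2) (ρ (φB p.2)) : ℂ))) • proj (φB p.2)

lemma aux_comp_sum {ι : Type*} (s : Finset ι) (T : H →ₗ[ℂ] H) (g : ι → (H →ₗ[ℂ] H)) :
    T ∘ₗ (∑ i ∈ s, g i) = ∑ i ∈ s, T ∘ₗ g i := by
  ext x
  simp [LinearMap.sum_apply]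

lemma aux_conj (X T : H →ₗ[ℂ] H) :
    (starRingEnd ℂ) (LinearMap.trace ℂ H (LinearMap.adjoint X ∘ₗ LinearMap.adjoint T)) =
      LinearMap.trace ℂ H (T ∘ₗ X) := by
  rw [← LinearMap.adjoint_comp]
  rw [LinearMap.trace_eq_sum_inner _ (stdOrthonormalBasis ℂ H),
    LinearMap.trace_eq_sum_inner _ (stdOrthonormalBasis ℂ H), map_sum]
  refine Finset.sum_congr rfl fun i _ => ?_
  rw [inner_conj_symm, LinearMap.adjoint_inner_left]

lemma aux_trace_proj (v : H) : LinearMap.trace ℂ H (proj v) = inner ℂ v v := by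
  rw [← InnerProductSpace.trace_rankOne]
  congr 1

lemma aux_trace_proj_comp (v : H) (Y : H →ₗ[ℂ] H) :
    LinearMap.trace ℂ H (proj v ∘ₗ Y) = inner ℂ v (Y v) := by
  rw [LinearMap.trace_comp_comm', ← InnerProductSpace.trace_rankOne (𝕜 := ℂ) (Y v) v]
  congr 1
  ext x
  simp [proj]

lemma aux_opF {ι : Type*} [Fintype ι] [DecidableEq ι] (φ : OrthonormalBasis ι ℂ H) (f : ι → ℂ)
    (b : ι) : opF (fun b => φ b) f (φ b) = f b • φ b := by
  simp [opF, proj, LinearMap.sum_apply, φ.inner_eq_ite]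

lemma aux_Q {ιA ιB : Type*} [Fintype ιA] [Fintype ιB] [DecidableEq ιB]
    (φB : OrthonormalBasis ιB ℂ H) (S T : ιA × ιB → (H →ₗ[ℂ] H)) (ρ X : H →ₗ[ℂ] H) (b : ιB) :
    QcondExp (fun b => φB b) S T ρ X (φB b) =
      ((∑ a, LinearMap.trace ℂ H (T (a, b) ∘ₗ X) *
        LinearMap.trace ℂ H (ρ ∘ₗ LinearMap.adjoint (S (a, b)))) /
          (inner ℂ (φB b) (ρ (φB b)) : ℂ)) • φB b := by
  simp only [QcondExp, aux_conj, LinearMap.sum_apply, LinearMap.smul_apply]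
  rw [Fintype.sum_prod_type, Finset.sum_div, Finset.sum_smul]
  refine Finset.sum_congr rfl fun a _ => ?_
  rw [Finset.sum_eq_single b]
  · simp [proj, mul_div_assoc]
  · intro c _ hc
    simp [proj, φB.inner_eq_ite, hc]
  · simp

lemma aux_span {ι : Type*} (S : ι → (H →ₗ[ℂ] H))
    (hspan : Submodule.span ℂ (Set.range S) = ⊤) (L : (H →ₗ[ℂ] H) →ₗ[ℂ] ℂ)
    (h : ∀ q, L (LinearMap.adjoint (S q)) = 0) (Y : H →ₗ[ℂ] H) : L Y = 0 := by
  have key : ∀ Z : H →ₗ[ℂ] H, L (LinearMap.adjoint Z) = 0 := by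
    intro Z
    have hZ : Z ∈ Submodule.span ℂ (Set.range S) := by rw [hspan]; trivial
    induction hZ using Submodule.span_induction with
    | mem x hx => obtain ⟨q, rfl⟩ := hx; exact h q
    | zero => simp
    | add x y _ _ hx hy => simp [hx, hy]
    | smul c x _ hx => rw [map_smulₛₗ, map_smul, hx, smul_zero]
  simpa using key (LinearMap.adjoint Y)

lemma aux_sep {ι : Type*} [Fintype ι] [DecidableEq ι] (S T : ι → (H →ₗ[ℂ] H))
    (hspan : Submodule.span ℂ (Set.range S) = ⊤)
    (hdual : ∀ p q, LinearMap.trace ℂ H (T p ∘ₗ LinearMap.adjoint (S q)) = if p = q then 1 else 0)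
    (Y : H →ₗ[ℂ] H) (h : ∀ p, LinearMap.trace ℂ H (T p ∘ₗ Y) = 0) : Y = 0 := by
  have hY : LinearMap.adjoint Y ∈ Submodule.span ℂ (Set.range S) := by rw [hspan]; trivial
  rw [Submodule.mem_span_range_iff_exists_fun] at hY
  obtain ⟨c, hc⟩ := hY
  have hY' : Y = ∑ q, (starRingEnd ℂ) (c q) • LinearMap.adjoint (S q) := by
    rw [← LinearMap.adjoint_adjoint Y, ← hc, map_sum]
    exact Finset.sum_congr rfl fun _ _ => map_smulₛₗ _ _ _
  have hc0 : ∀ p, (starRingEnd ℂ) (c p) = 0 := by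
    intro p
    have := h p
    rw [hY'] at this
    simpa [aux_comp_sum, LinearMap.comp_smul, hdual] using this
  rw [hY']
  simp only [hc0, zero_smul, Finset.sum_const_zero]

lemma aux_pos (v w : H) : (inner ℂ w (w + proj v w) : ℂ) =
    ((‖w‖ ^ 2 + ‖(inner ℂ v w : ℂ)‖ ^ 2 : ℝ) : ℂ) := by
  rw [inner_add_right, inner_self_eq_norm_sq_to_K]
  simp only [proj, LinearMap.coe_mk, AddHom.coe_mk, inner_smul_right]
  rw [← inner_conj_symm w v, Complex.mul_conj, Complex.normSq_eq_norm_sq]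
  push_cast
  rfl

lemma aux_density [Nontrivial H] {ι : Type*} [Fintype ι] (φB : OrthonormalBasis ι ℂ H)
    (Y : H →ₗ[ℂ] H)
    (h : ∀ ρ : H →ₗ[ℂ] H, (∀ v : H, 0 ≤ (inner ℂ v (ρ v) : ℂ)) →
      LinearMap.trace ℂ H ρ = 1 →
      (∀ b : ι, (inner ℂ (φB b) (ρ (φB b)) : ℂ) ≠ 0) → LinearMap.trace ℂ H (ρ ∘ₗ Y) = 0) :
    Y = 0 := by
  have key : ∀ v : H, LinearMap.trace ℂ H Y + inner ℂ v (Y v) = 0 := by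
    intro v
    set r : ℝ := (Module.finrank ℂ H : ℝ) + ‖v‖ ^ 2 with hr
    have hrpos : 0 < r := by
      have : 0 < Module.finrank ℂ H := Module.finrank_pos
      positivity
    have hval : ∀ w : H, (inner ℂ w ((((r⁻¹ : ℝ) : ℂ) • (LinearMap.id + proj v) : H →ₗ[ℂ] H) w) : ℂ) =
        ((r⁻¹ * (‖w‖ ^ 2 + ‖(inner ℂ v w : ℂ)‖ ^ 2) : ℝ) : ℂ) := by
      intro w
      rw [LinearMap.smul_apply, inner_smul_right, LinearMap.add_apply, LinearMap.id_apply, aux_pos]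
      push_cast
      rfl
    have := h (((r⁻¹ : ℝ) : ℂ) • (LinearMap.id + proj v)) ?_ ?_ ?_
    · rw [LinearMap.smul_comp, LinearMap.add_comp, LinearMap.id_comp, map_smul, map_add,
        aux_trace_proj_comp, smul_eq_mul] at this
      refine (mul_eq_zero.mp this).resolve_left ?_
      exact_mod_cast (inv_pos.mpr hrpos).ne'
    · intro w
      rw [hval]
      exact_mod_cast by positivity
    · rw [map_smul, map_add, LinearMap.trace_id, aux_trace_proj, inner_self_eq_norm_sq_to_K,
        smul_eq_mul]
      have : ((Module.finrank ℂ H : ℂ) + ((‖v‖ : ℝ) : ℂ) ^ 2) = (r : ℂ) := by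
        rw [hr]; push_cast; rfl
      refine (congrArg _ this).trans ?_
      rw [← Complex.ofReal_mul, inv_mul_cancel₀ hrpos.ne', Complex.ofReal_one]
    · intro b
      rw [hval, φB.norm_eq_one]
      have : 0 < r⁻¹ * (1 ^ 2 + ‖(inner ℂ v (φB b) : ℂ)‖ ^ 2) := by positivity
      exact_mod_cast this.ne'
  have htr : LinearMap.trace ℂ H Y = 0 := by simpa using key 0
  rw [← inner_map_self_eq_zero]
  intro x
  have := key x
  rw [htr, zero_add] at this
  rw [← inner_conj_symm, this, map_zero]

lemma aux_proj_comp_adj (u v : H) :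
    LinearMap.adjoint (proj u ∘ₗ proj v) = proj v ∘ₗ proj u := by
  have : ∀ u : H, LinearMap.adjoint (proj u) = proj u := by
    intro u
    symm
    rw [LinearMap.eq_adjoint_iff]
    intro x y
    simp [proj, inner_smul_left, inner_smul_right, mul_comm]
  rw [LinearMap.adjoint_comp, this, this]

/-- for a Born-compatible frame `(S_{a,b})` (a basis of `𝓛(H)`, with dual frame
`(T_{a,b})`), the associated `Q`-conditional expectation satisfies the right pull-through
property `𝔼^Q_ρ̂(X̂f(B̂)|B̂) = f(B̂)𝔼^Q_ρ̂(X̂|B̂)` for all admissible states `ρ̂`, operators `X̂`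
and functions `f`, if and only if `S_{a,b} = Π_b^B̂ Π_a^Â` for all `(a,b)`, i.e. `(Q,Q̃)` is
the right Kirkwood-Dirac representation. -/
theorem stmt18 {ιA ιB : Type*} [Fintype ιA] [Fintype ιB] [DecidableEq ιA] [DecidableEq ιB]
    (φA : OrthonormalBasis ιA ℂ H) (φB : OrthonormalBasis ιB ℂ H)
    (A B : H →ₗ[ℂ] H) (α : ιA → ℝ) (β : ιB → ℝ)
    (hα : Function.Injective α) (hβ : Function.Injective β)
    (hA : ∀ a, A (φA a) = (α a : ℂ) • φA a) (hB : ∀ b, B (φB b) = (β b : ℂ) • φB b)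
    (hAB : ∀ (a : ιA) (b : ιB), (inner ℂ (φA a) (φB b) : ℂ) ≠ 0)
    (S T : ιA × ιB → (H →ₗ[ℂ] H))
    (hBornB : ∀ b₀ : ιB, ∑ a : ιA, LinearMap.adjoint (S (a, b₀)) = proj (φB b₀))
    (hBornA : ∀ a₀ : ιA, ∑ b : ιB, LinearMap.adjoint (S (a₀, b)) = proj (φA a₀))
    (hindep : LinearIndependent ℂ S)
    (hspan : Submodule.span ℂ (Set.range S) = ⊤)
    (hdual : ∀ p q : ιA × ιB,
      LinearMap.trace ℂ H (T p ∘ₗ LinearMap.adjoint (S q)) = if p = q then 1 else 0) :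
    (∀ ρ : H →ₗ[ℂ] H, (∀ v : H, 0 ≤ (inner ℂ v (ρ v) : ℂ)) →
      LinearMap.trace ℂ H ρ = 1 →
      (∀ b : ιB, (inner ℂ (φB b) (ρ (φB b)) : ℂ) ≠ 0) →
      ∀ (X : H →ₗ[ℂ] H) (f : ιB → ℂ),
        QcondExp (fun b => φB b) S T ρ (X ∘ₗ opF (fun b => φB b) f) =
          opF (fun b => φB b) f ∘ₗ QcondExp (fun b => φB b) S T ρ X) ↔
    (∀ p : ιA × ιB, S p = proj (φB p.2) ∘ₗ proj (φA p.1)) := by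
  constructor
  · intro h
    rintro ⟨a₀, b₀⟩
    have : Nontrivial H := ⟨φB b₀, 0, by
      intro h0
      have := φB.norm_eq_one b₀
      simp [h0] at this⟩
    -- the trace form of the pull-through property
    have hF : ∀ (p : ιA × ιB) (X : H →ₗ[ℂ] H) (f : ιB → ℂ),
        LinearMap.trace ℂ H (T p ∘ₗ (X ∘ₗ opF (fun b => φB b) f)) =
          f p.2 * LinearMap.trace ℂ H (T p ∘ₗ X) := by
      rintro ⟨a, b⟩ X f
      have hY : ∑ a, (LinearMap.trace ℂ H (T (a, b) ∘ₗ (X ∘ₗ opF (fun b => φB b) f)) -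
          f b * LinearMap.trace ℂ H (T (a, b) ∘ₗ X)) • LinearMap.adjoint (S (a, b)) = 0 := by
        apply aux_density φB
        intro ρ h1 h2 h3
        have h4 := congrArg (fun L : H →ₗ[ℂ] H => (inner ℂ (φB b) (L (φB b)) : ℂ)) (h ρ h1 h2 h3 X f)
        simp only [LinearMap.comp_apply, aux_Q, map_smul, aux_opF, inner_smul_right,
          φB.inner_eq_one, mul_one] at h4
        rw [div_mul_eq_mul_div, div_left_inj' (h3 b), Finset.sum_mul] at h4
        simp only [aux_comp_sum, LinearMap.comp_smul, map_sum, map_smul, smul_eq_mul,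
          sub_mul, Finset.sum_sub_distrib]
        rw [h4, sub_eq_zero]
        exact Finset.sum_congr rfl fun _ _ => by ring
      have h5 := congrArg (fun L : H →ₗ[ℂ] H => LinearMap.trace ℂ H (T (a, b) ∘ₗ L)) hY
      simp only [aux_comp_sum, LinearMap.comp_smul, map_sum, map_smul, smul_eq_mul, hdual,
        Prod.mk.injEq, and_true, mul_ite, mul_one, mul_zero, Finset.sum_ite_eq, Finset.mem_univ,
        if_true, LinearMap.comp_zero, map_zero] at h5
      exact sub_eq_zero.mp h5
    have hS0 : ∀ (q : ιA × ιB) (b : ιB), q.2 ≠ b → LinearMap.adjoint (S q) (φB b) = 0 := by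
      intro q b hqb
      have h0 : LinearMap.adjoint (S q) ∘ₗ opF (fun b => φB b) (Pi.single b 1) = 0 := by
        apply aux_sep S T hspan hdual
        intro p
        rw [hF, hdual]
        by_cases hpq : p = q
        · subst hpq
          simp [hqb]
        · simp [hpq]
      have := congrArg (fun L : H →ₗ[ℂ] H => L (φB b)) h0
      simpa [aux_opF] using this
    have hadj : LinearMap.adjoint (S (a₀, b₀)) = proj (φA a₀) ∘ₗ proj (φB b₀) := by
      refine φB.toBasis.ext fun b => ?_
      rw [OrthonormalBasis.coe_toBasis]
      by_cases hb : b₀ = b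
      · subst hb
        have h1 := congrArg (fun L : H →ₗ[ℂ] H => L (φB b₀)) (hBornA a₀)
        simp only [LinearMap.sum_apply] at h1
        rw [Finset.sum_eq_single b₀ (fun c _ hc => hS0 (a₀, c) b₀ hc) (by simp)] at h1
        rw [h1]
        simp [proj]
      · rw [hS0 (a₀, b₀) b hb]
        simp [proj, φB.inner_eq_ite, hb]
    rw [← LinearMap.adjoint_adjoint (S (a₀, b₀)), hadj, aux_proj_comp_adj]
  · intro hS ρ _ _ _ X f
    have hF : ∀ (p : ιA × ιB) (X : H →ₗ[ℂ] H),
        LinearMap.trace ℂ H (T p ∘ₗ (X ∘ₗ opF (fun b => φB b) f)) =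
          f p.2 * LinearMap.trace ℂ H (T p ∘ₗ X) := by
      intro p X
      let L : (H →ₗ[ℂ] H) →ₗ[ℂ] ℂ :=
        { toFun := fun X => LinearMap.trace ℂ H (T p ∘ₗ (X ∘ₗ opF (fun b => φB b) f)) -
            f p.2 * LinearMap.trace ℂ H (T p ∘ₗ X)
          map_add' := by
            intro x y
            simp only [LinearMap.add_comp, LinearMap.comp_add, map_add]
            ring
          map_smul' := by
            intro c x
            simp only [LinearMap.smul_comp, LinearMap.comp_smul, map_smul, smul_eq_mul,
              RingHom.id_apply]
            ring }
      refine sub_eq_zero.mp (aux_span S hspan L ?_ X)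
      intro q
      have hq : LinearMap.adjoint (S q) ∘ₗ opF (fun b => φB b) f =
          f q.2 • LinearMap.adjoint (S q) := by
        rw [hS q, aux_proj_comp_adj]
        refine φB.toBasis.ext fun b => ?_
        simp only [OrthonormalBasis.coe_toBasis, LinearMap.comp_apply, aux_opF, map_smul,
          LinearMap.smul_apply]
        by_cases hb : q.2 = b
        · rw [hb]
        · simp [proj, φB.inner_eq_ite, hb]
      change LinearMap.trace ℂ H (T p ∘ₗ (LinearMap.adjoint (S q) ∘ₗ opF (fun b => φB b) f)) -
            f p.2 * LinearMap.trace ℂ H (T p ∘ₗ LinearMap.adjoint (S q)) = 0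
      rw [hq, LinearMap.comp_smul, map_smul, hdual]
      by_cases hpq : p = q
      · simp [hpq]
      · simp [hpq]
    refine φB.toBasis.ext fun b => ?_
    simp only [OrthonormalBasis.coe_toBasis, LinearMap.comp_apply, aux_Q, map_smul, aux_opF, hF,
      smul_smul]
    congr 1
    rw [div_mul_eq_mul_div, Finset.sum_mul]
    congr 1
    exact Finset.sum_congr rfl fun _ _ => by ring
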